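/- Fix real numbers v, w, s, t, ρ with w > 0, s < t, v + s/2 < 0 and ρ > 0. For each positive integer N with 4N > ρ, let q = q_N = exp(−2/√N) and θ = arccos(1 − ρ/(2N)). Then the limit as N → ∞ of [ (q^{−2v−s};q)_∞ (q^{t−s};q)_∞ · ∏_{σ∈{+1,−1}} (−q^{w+t/2} e^{σiθ};q)_∞ ] / [ (−q^{w−v};q)_∞ (−q^{v+w+t};q)_∞ · ∏_{σ∈{+1,−1}} (q^{t/2−v−s} e^{σiθ};q)_∞ ] exists and equals |Γ(t/2 − s − v + i√ρ/2)|² / ( Γ(−2v−s) Γ(t−s) ). -/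

import Mathlib

open Filter

/-- Infinite q-Pochhammer symbol `(a;q)_∞ = ∏_{k=0}^∞ (1 - a q^k)` for complex `a, q`. -/
noncomputable def qPochInf (a q : ℂ) : ℂ := ∏' k : ℕ, (1 - a * q ^ k)

/-- Weak asymmetry scaling `q_N = exp(-2/√N)`. -/
noncomputable def qN (N : ℕ) : ℝ := Real.exp (-2 / Real.sqrt N)

/-- Real powers of `q_N`: `q_N^x = exp(-2x/√N)`, as a complex number. -/
noncomputable def qpow (N : ℕ) (x : ℝ) : ℂ := Complex.ofReal (Real.exp (-2 * x / Real.sqrt N))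

/-- `e^{ix}` for real `x`. -/
noncomputable def eI (x : ℝ) : ℂ := Complex.exp (Complex.I * x)

/-- `|Γ(a+ib)|² := Γ(a+ib)·Γ(a−ib)` for real `a, b`. -/
noncomputable def GammaSq (a b : ℝ) : ℂ :=
  Complex.Gamma ((a : ℂ) + (b : ℂ) * Complex.I) * Complex.Gamma ((a : ℂ) - (b : ℂ) * Complex.I)

/-!
Pairing the factors, `(1 - uz)(1 - u/z) = u (u + u⁻¹ - (z + z⁻¹))`. For `q = e^{-h}` and
`u = e^{-hc}`, each quotient of two symmetric pairs of q-Pochhammer symbols is therefore an infinite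
product of factors `1 + (β - α) / (cosh (h (c + k)) - β)` with `2α = z + z⁻¹`, `2β = z' + z'⁻¹`.
As `h → 0` the numerator is `O(h²)`, and `cosh x - 1 ≥ x² / 2` bounds the denominator below by a
multiple of `h² (c + k)²`, so dominated convergence applies. For the pair with `β = cos θ` and
`1 - cos θ ~ y² h² / 2`, the limiting factors are
`(c + d + k)(c - d + k) / ((c + iy + k)(c - iy + k))`, whose product is a quotient of Gamma values
by Euler's limit formula. For the pair with negative parameters `β = -cosh (hd)` stays near `-1`,
the denominators do not degenerate, and every limiting factor is `1`.
-/

open scoped Topology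

/-- The symmetric product `(uz, u/z; q)_∞`, written `(u z^{±1}; q)_∞` or
`∏_σ (u z^σ; q)_∞` in the literature. -/
noncomputable def qPochPair (u z q : ℂ) : ℂ := qPochInf (u * z) q * qPochInf (u * z⁻¹) q

section qPochhammer

variable {q : ℂ}

lemma summable_norm_neg_mul_pow (hq : ‖q‖ < 1) (a : ℂ) :
    Summable fun k : ℕ => ‖-(a * q ^ k)‖ := by
  simpa only [norm_neg, norm_mul, norm_pow] using
    (summable_geometric_of_lt_one (norm_nonneg q) hq).mul_left ‖a‖

lemma multipliable_one_sub_mul_pow (hq : ‖q‖ < 1) (a : ℂ) :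
    Multipliable fun k : ℕ => 1 - a * q ^ k := by
  simpa only [sub_eq_add_neg] using
    multipliable_one_add_of_summable (summable_norm_neg_mul_pow hq a)

lemma qPochInf_ne_zero (hq : ‖q‖ < 1) {a : ℂ} (ha : ∀ k : ℕ, 1 - a * q ^ k ≠ 0) :
    qPochInf a q ≠ 0 := by
  simp only [sub_eq_add_neg] at ha
  simpa only [qPochInf, sub_eq_add_neg] using
    tprod_one_add_ne_zero_of_summable ha (summable_norm_neg_mul_pow hq a)

lemma one_sub_mul_mul_one_sub_mul_inv {K : Type*} [Field K] {u z : K} (hu : u ≠ 0) (hz : z ≠ 0) :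
    (1 - u * z) * (1 - u * z⁻¹) = u * (u + u⁻¹ - (z + z⁻¹)) := by
  field_simp
  ring

lemma qPochPair_div_qPochPair (hq₀ : q ≠ 0) (hq : ‖q‖ < 1) {u z z' : ℂ} (hu : u ≠ 0)
    (hz : z ≠ 0) (hz' : z' ≠ 0)
    (hne : ∀ k : ℕ, u * q ^ k + (u * q ^ k)⁻¹ - (z' + z'⁻¹) ≠ 0) :
    qPochPair u z q / qPochPair u z' q = ∏' k : ℕ,
      (1 + (z' + z'⁻¹ - (z + z⁻¹)) / (u * q ^ k + (u * q ^ k)⁻¹ - (z' + z'⁻¹))) := by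
  have huq (k : ℕ) : u * q ^ k ≠ 0 := mul_ne_zero hu (pow_ne_zero k hq₀)
  have factor {x : ℂ} (hx : x ≠ 0) (k : ℕ) : (1 - u * x * q ^ k) * (1 - u * x⁻¹ * q ^ k) =
      u * q ^ k * (u * q ^ k + (u * q ^ k)⁻¹ - (x + x⁻¹)) := by
    rw [← one_sub_mul_mul_one_sub_mul_inv (huq k) hx, mul_right_comm u x, mul_right_comm u x⁻¹]
  have factor_ne_zero (k : ℕ) : (1 - u * z' * q ^ k) * (1 - u * z'⁻¹ * q ^ k) ≠ 0 := by
    rw [factor hz']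
    exact mul_ne_zero (huq k) (hne k)
  have pair_ne_zero : qPochPair u z' q ≠ 0 :=
    mul_ne_zero (qPochInf_ne_zero hq fun k => left_ne_zero_of_mul (factor_ne_zero k))
      (qPochInf_ne_zero hq fun k => right_ne_zero_of_mul (factor_ne_zero k))
  have hasProd_pair (x : ℂ) :
      HasProd (fun k : ℕ => (1 - u * x * q ^ k) * (1 - u * x⁻¹ * q ^ k)) (qPochPair u x q) :=
    (multipliable_one_sub_mul_pow hq _).hasProd.mul (multipliable_one_sub_mul_pow hq _).hasProd
  rw [← ((hasProd_pair z).div₀ (hasProd_pair z') pair_ne_zero).tprod_eq]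
  refine tprod_congr fun k => ?_
  rw [factor hz, factor hz', mul_div_mul_left _ _ (huq k), one_add_div (hne k)]
  congr 1
  ring

lemma qPochPair_exp_div_qPochPair_exp {h c α β : ℝ} {z z' : ℂ} (hh : 0 < h) (hz : z ≠ 0)
    (hz' : z' ≠ 0) (hα : z + z⁻¹ = 2 * α) (hβ : z' + z'⁻¹ = 2 * β)
    (hne : ∀ k : ℕ, Real.cosh (h * (c + k)) - β ≠ 0) :
    qPochPair (Real.exp (-(h * c))) z (Real.exp (-h)) /
        qPochPair (Real.exp (-(h * c))) z' (Real.exp (-h)) =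
      ∏' k : ℕ, (1 + (((β - α) / (Real.cosh (h * (c + k)) - β) : ℝ) : ℂ)) := by
  have hcosh (k : ℕ) : (Real.exp (-(h * c)) : ℂ) * (Real.exp (-h) : ℂ) ^ k +
      ((Real.exp (-(h * c)) : ℂ) * (Real.exp (-h) : ℂ) ^ k)⁻¹ - 2 * β =
        2 * ((Real.cosh (h * (c + k)) - β : ℝ) : ℂ) := by
    have hpow : Real.exp (-(h * c)) * Real.exp (-h) ^ k = Real.exp (-(h * (c + k))) := by
      rw [← Real.exp_nat_mul, ← Real.exp_add]
      congr 1
      ring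
    rw [← Complex.ofReal_pow, ← Complex.ofReal_mul, hpow, ← Complex.ofReal_inv, ← Real.exp_neg,
      neg_neg, Real.cosh_eq]
    push_cast
    ring
  have hq : ‖(Real.exp (-h) : ℂ)‖ < 1 := by
    rw [Complex.norm_real, Real.norm_eq_abs, Real.abs_exp, Real.exp_lt_one_iff]
    exact neg_neg_of_pos hh
  rw [qPochPair_div_qPochPair (Complex.ofReal_ne_zero.2 (Real.exp_ne_zero _)) hq
    (Complex.ofReal_ne_zero.2 (Real.exp_ne_zero _)) hz hz' fun k => by
      rw [hβ, hcosh]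
      exact mul_ne_zero two_ne_zero (Complex.ofReal_ne_zero.2 (hne k))]
  refine tprod_congr fun k => ?_
  rw [hβ, hα, hcosh, ← mul_sub, mul_div_mul_left _ _ two_ne_zero]
  push_cast
  rfl

end qPochhammer

lemma cosh_sub_one_eq_two_mul_sinh_half_sq (x : ℝ) :
    Real.cosh x - 1 = 2 * Real.sinh (x / 2) ^ 2 := by
  have hx := Real.cosh_two_mul (x / 2)
  rw [Real.cosh_sq, mul_div_cancel₀ x two_ne_zero] at hx
  linarith

lemma sq_div_two_le_cosh_sub_one (x : ℝ) : x ^ 2 / 2 ≤ Real.cosh x - 1 := by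
  have hsinh : |x / 2| ≤ |Real.sinh (x / 2)| := by
    rw [Real.abs_sinh]
    exact Real.self_le_sinh_iff.2 (abs_nonneg _)
  rw [cosh_sub_one_eq_two_mul_sinh_half_sq]
  linarith [sq_le_sq.2 hsinh]

lemma sq_mul_sq_add_sq_div_two_le_cosh_sub {h β η : ℝ} (hβ : η ^ 2 / 2 * h ^ 2 ≤ 1 - β) (x : ℝ) :
    h ^ 2 * (x ^ 2 + η ^ 2) / 2 ≤ Real.cosh (h * x) - β := by
  linarith [sq_div_two_le_cosh_sub_one (h * x), mul_pow h x 2]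

lemma tendsto_cosh_mul_sub_one_div_sq (e : ℝ) :
    Tendsto (fun h : ℝ => (Real.cosh (h * e) - 1) / h ^ 2) (𝓝[≠] 0) (𝓝 (e ^ 2 / 2)) := by
  have hderiv : HasDerivAt (fun h : ℝ => Real.sinh (h * (e / 2))) (e / 2) 0 := by
    simpa using ((hasDerivAt_id (0 : ℝ)).mul_const (e / 2)).sinh
  have hlim := (hderiv.tendsto_slope.pow 2).const_mul 2
  rw [show 2 * (e / 2) ^ 2 = e ^ 2 / 2 by ring] at hlim
  refine hlim.congr fun h => ?_
  rw [cosh_sub_one_eq_two_mul_sinh_half_sq, slope_def_field, zero_mul, Real.sinh_zero, sub_zero,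
    sub_zero, div_pow, mul_div_assoc, mul_div_assoc]

lemma summable_inv_add_mul_add (a b : ℂ) : Summable fun k : ℕ => ((a + k) * (b + k))⁻¹ := by
  have hsum : Summable fun n : ℤ => ((a + n) * (b + n))⁻¹ := by
    apply EisensteinSeries.summable_inv_of_isBigO_rpow_inv one_lt_two
    simpa [pow_two] using (EisensteinSeries.linear_inv_isBigO_right 1 b).mul
      (EisensteinSeries.linear_inv_isBigO_right 1 a)
  exact_mod_cast hsum.comp_injective Nat.cast_injective

lemma add_sq_add_sq_pos {c y : ℝ} {k : ℕ} (hcy : c = -k → y ≠ 0) : 0 < (c + k) ^ 2 + y ^ 2 := by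
  rcases eq_or_ne (c + k) 0 with hck | hck
  · have hy := hcy (eq_neg_of_add_eq_zero_left hck)
    positivity
  · positivity

lemma add_mul_I_add_mul_sub_mul_I_add (c y x : ℝ) :
    ((c : ℂ) + y * Complex.I + x) * ((c : ℂ) - y * Complex.I + x) =
      (((c + x) ^ 2 + y ^ 2 : ℝ) : ℂ) := by
  push_cast
  linear_combination -(y : ℂ) ^ 2 * Complex.I_sq

lemma summable_inv_add_sq_add_sq (c y : ℝ) :
    Summable fun k : ℕ => ((c + k) ^ 2 + y ^ 2)⁻¹ := by
  have hsum := summable_inv_add_mul_add ((c : ℂ) + y * Complex.I) ((c : ℂ) - y * Complex.I)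
  rw [← Complex.summable_ofReal]
  refine hsum.congr fun k => ?_
  rw [← Complex.ofReal_natCast, add_mul_I_add_mul_sub_mul_I_add, Complex.ofReal_inv]

lemma GammaSeq_mul_div_GammaSeq_mul {a b c d : ℂ} (habcd : a + b = c + d) {n : ℕ} (hn : n ≠ 0) :
    Complex.GammaSeq c n * Complex.GammaSeq d n /
        (Complex.GammaSeq a n * Complex.GammaSeq b n) =
      ∏ k ∈ Finset.range (n + 1), (a + k) * (b + k) / ((c + k) * (d + k)) := by
  have hn' : (n : ℂ) ≠ 0 := Nat.cast_ne_zero.2 hn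
  have hfac : (n.factorial : ℂ) ≠ 0 := Nat.cast_ne_zero.2 n.factorial_ne_zero
  have hcpow (x : ℂ) : (n : ℂ) ^ x ≠ 0 := fun h => hn' ((Complex.cpow_eq_zero_iff _ _).1 h).1
  have hnum : (n : ℂ) ^ a * n.factorial * ((n : ℂ) ^ b * n.factorial) =
      (n : ℂ) ^ c * n.factorial * ((n : ℂ) ^ d * n.factorial) := by
    rw [mul_mul_mul_comm, mul_mul_mul_comm (_ ^ c), ← Complex.cpow_add _ _ hn',
      ← Complex.cpow_add _ _ hn', habcd]
  simp only [Complex.GammaSeq, Finset.prod_div_distrib, Finset.prod_mul_distrib]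
  rw [div_mul_div_comm, div_mul_div_comm, div_div_div_eq, hnum,
    mul_comm _ (_ * (_ * (n.factorial : ℂ))), mul_div_mul_left]
  exact mul_ne_zero (mul_ne_zero (hcpow c) hfac) (mul_ne_zero (hcpow d) hfac)

theorem tprod_add_mul_add_div {a b c d : ℂ} (habcd : a + b = c + d)
    (ha : ∀ m : ℕ, a ≠ -m) (hb : ∀ m : ℕ, b ≠ -m) (hc : ∀ m : ℕ, c ≠ -m) (hd : ∀ m : ℕ, d ≠ -m) :
    ∏' k : ℕ, (a + k) * (b + k) / ((c + k) * (d + k)) =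
      Complex.Gamma c * Complex.Gamma d / (Complex.Gamma a * Complex.Gamma b) := by
  have factor (k : ℕ) : (a + k) * (b + k) / ((c + k) * (d + k)) =
      1 + (a * b - c * d) * ((c + k) * (d + k))⁻¹ := by
    have hck : c + k ≠ 0 := fun h => hc k (eq_neg_of_add_eq_zero_left h)
    have hdk : d + k ≠ 0 := fun h => hd k (eq_neg_of_add_eq_zero_left h)
    field_simp
    linear_combination (k : ℂ) * habcd
  have hmul : Multipliable fun k : ℕ => (a + k) * (b + k) / ((c + k) * (d + k)) := by
    simp only [factor]
    exact multipliable_one_add_of_summable ((summable_inv_add_mul_add c d).mul_left _).norm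
  have hGamma := ((Complex.GammaSeq_tendsto_Gamma c).mul (Complex.GammaSeq_tendsto_Gamma d)).div
    ((Complex.GammaSeq_tendsto_Gamma a).mul (Complex.GammaSeq_tendsto_Gamma b))
    (mul_ne_zero (Complex.Gamma_ne_zero ha) (Complex.Gamma_ne_zero hb))
  refine tendsto_nhds_unique
    ((tendsto_add_atTop_iff_nat 1).2 hmul.hasProd.tendsto_prod_nat) (hGamma.congr' ?_)
  filter_upwards [eventually_ne_atTop 0] with n hn
  exact GammaSeq_mul_div_GammaSeq_mul habcd hn

lemma tprod_one_sub_div_eq_GammaSq_div {c d y : ℝ} (hadd : ∀ m : ℕ, c + d ≠ -m)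
    (hsub : ∀ m : ℕ, c - d ≠ -m) (hcy : ∀ m : ℕ, c = -m → y ≠ 0) :
    ∏' k : ℕ, (1 + ((-((y ^ 2 + d ^ 2) / ((c + k) ^ 2 + y ^ 2)) : ℝ) : ℂ)) =
      GammaSq c y / (Complex.Gamma (c + d : ℝ) * Complex.Gamma (c - d : ℝ)) := by
  have hne (k : ℕ) : ((c : ℂ) + y * Complex.I + k) * ((c : ℂ) - y * Complex.I + k) ≠ 0 := by
    rw [← Complex.ofReal_natCast, add_mul_I_add_mul_sub_mul_I_add]
    exact Complex.ofReal_ne_zero.2 (add_sq_add_sq_pos (hcy k)).ne'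
  have hplus (m : ℕ) : (c : ℂ) + y * Complex.I ≠ -m := fun h =>
    left_ne_zero_of_mul (hne m) (by rw [h, neg_add_cancel])
  have hminus (m : ℕ) : (c : ℂ) - y * Complex.I ≠ -m := fun h =>
    right_ne_zero_of_mul (hne m) (by rw [h, neg_add_cancel])
  rw [GammaSq, ← tprod_add_mul_add_div (by push_cast; ring) (fun m => mod_cast hadd m)
    (fun m => mod_cast hsub m) hplus hminus]
  refine tprod_congr fun k => ?_
  have hden : (c + k) ^ 2 + y ^ 2 ≠ 0 := (add_sq_add_sq_pos (hcy k)).ne'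
  have hreal : 1 + -((y ^ 2 + d ^ 2) / ((c + k) ^ 2 + y ^ 2)) =
      (c + d + k) * (c - d + k) / ((c + k) ^ 2 + y ^ 2) := by
    field_simp
    ring
  rw [← Complex.ofReal_natCast, add_mul_I_add_mul_sub_mul_I_add]
  exact_mod_cast congrArg Complex.ofReal hreal

lemma eI_ne_zero (x : ℝ) : eI x ≠ 0 := Complex.exp_ne_zero _

lemma eI_neg (x : ℝ) : eI (-x) = (eI x)⁻¹ := by
  rw [eI, eI, ← Complex.exp_neg, Complex.ofReal_neg, mul_neg]

lemma eI_add_inv (x : ℝ) : eI x + (eI x)⁻¹ = 2 * (Real.cos x : ℂ) := by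
  rw [← eI_neg, eI, eI, Complex.ofReal_cos, Complex.two_cos, Complex.ofReal_neg,
    mul_comm Complex.I, mul_comm Complex.I]

lemma ofReal_exp_neg_add_inv (x : ℝ) :
    (Real.exp (-x) : ℂ) + (Real.exp (-x) : ℂ)⁻¹ = 2 * (Real.cosh x : ℂ) := by
  rw [← Complex.ofReal_inv, ← Real.exp_neg, neg_neg, Real.cosh_eq]
  push_cast
  ring

section Limit

variable {ι : Type*} {l : Filter ι} {h θ : ι → ℝ} {y : ℝ}

lemma tendsto_tprod_one_add_div_cosh_sub {δ β : ι → ℝ} {c η D : ℝ} {G : ℕ → ℝ}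
    (hh : Tendsto h l (𝓝[≠] 0)) (hη : ∀ k : ℕ, c = -k → η ≠ 0)
    (hβ : ∀ᶠ i in l, η ^ 2 / 2 * h i ^ 2 ≤ 1 - β i)
    (hδ : Tendsto (fun i => δ i / h i ^ 2) l (𝓝 D))
    (hG : ∀ k : ℕ, Tendsto (fun i => δ i / (Real.cosh (h i * (c + k)) - β i)) l (𝓝 (G k))) :
    Tendsto (fun i => ∏' k : ℕ, (1 + ((δ i / (Real.cosh (h i * (c + k)) - β i) : ℝ) : ℂ))) l
      (𝓝 (∏' k : ℕ, (1 + (G k : ℂ)))) := by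
  refine tendsto_tprod_one_add_of_dominated_convergence
    ((summable_inv_add_sq_add_sq c η).mul_left (2 * (|D| + 1)))
    (fun k => (Complex.continuous_ofReal.tendsto _).comp (hG k)) ?_
  filter_upwards [hh.eventually self_mem_nhdsWithin, hβ,
    hδ.abs.eventually_le_const (lt_add_one |D|)] with i (hi : h i ≠ 0) hβi hδi k
  have hsq : 0 < h i ^ 2 := by positivity
  have hck := add_sq_add_sq_pos (hη k)
  have hpos : 0 < h i ^ 2 * ((c + k) ^ 2 + η ^ 2) / 2 := by positivity
  have hden := sq_mul_sq_add_sq_div_two_le_cosh_sub hβi (c + k)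
  rw [abs_div, abs_of_pos hsq, div_le_iff₀ hsq] at hδi
  rw [Complex.norm_real, Real.norm_eq_abs, abs_div, abs_of_pos (hpos.trans_le hden)]
  calc |δ i| / (Real.cosh (h i * (c + k)) - β i)
      ≤ (|D| + 1) * h i ^ 2 / (h i ^ 2 * ((c + k) ^ 2 + η ^ 2) / 2) :=
        div_le_div₀ (by positivity) hδi hpos hden
    _ = 2 * (|D| + 1) * ((c + k) ^ 2 + η ^ 2)⁻¹ := by field_simp

theorem tendsto_qPochPair_div_qPochPair {α β : ι → ℝ} {z z' : ι → ℂ} {c η D : ℝ} {G : ℕ → ℝ}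
    (hh : Tendsto h l (𝓝[>] 0)) (hz : ∀ i, z i ≠ 0) (hz' : ∀ i, z' i ≠ 0)
    (hα : ∀ i, z i + (z i)⁻¹ = 2 * α i) (hβ : ∀ i, z' i + (z' i)⁻¹ = 2 * β i)
    (hη : ∀ k : ℕ, c = -k → η ≠ 0) (hβη : ∀ᶠ i in l, η ^ 2 / 2 * h i ^ 2 ≤ 1 - β i)
    (hD : Tendsto (fun i => (β i - α i) / h i ^ 2) l (𝓝 D))
    (hG : ∀ k : ℕ, Tendsto (fun i => (β i - α i) / (Real.cosh (h i * (c + k)) - β i)) l (𝓝 (G k))) :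
    Tendsto (fun i => qPochPair (Real.exp (-(h i * c))) (z i) (Real.exp (-h i)) /
        qPochPair (Real.exp (-(h i * c))) (z' i) (Real.exp (-h i))) l
      (𝓝 (∏' k : ℕ, (1 + (G k : ℂ)))) := by
  refine (tendsto_tprod_one_add_div_cosh_sub (hh.mono_right (nhdsGT_le_nhdsNE 0)) hη hβη hD
    hG).congr' ?_
  filter_upwards [hh.eventually self_mem_nhdsWithin, hβη] with i (hi : 0 < h i) hβi
  refine (qPochPair_exp_div_qPochPair_exp hi (hz i) (hz' i) (hα i) (hβ i) fun k => ?_).symm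
  have hck := add_sq_add_sq_pos (hη k)
  have hden := sq_mul_sq_add_sq_div_two_le_cosh_sub hβi (c + k)
  exact (lt_of_lt_of_le (by positivity) hden).ne'

lemma tendsto_cos_sub_cosh_div_sq (hh : Tendsto h l (𝓝[≠] 0))
    (hθ : Tendsto (fun i => (1 - Real.cos (θ i)) / h i ^ 2) l (𝓝 (y ^ 2 / 2))) (d : ℝ) :
    Tendsto (fun i => (Real.cos (θ i) - Real.cosh (h i * d)) / h i ^ 2) l
      (𝓝 (-((y ^ 2 + d ^ 2) / 2))) := by
  have hlim := (hθ.add ((tendsto_cosh_mul_sub_one_div_sq d).comp hh)).neg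
  rw [← add_div] at hlim
  refine hlim.congr fun i => ?_
  simp only [Function.comp_apply]
  ring

theorem tendsto_qPochPair_div_qPochPair_eI {c d : ℝ} (hadd : ∀ m : ℕ, c + d ≠ -m)
    (hsub : ∀ m : ℕ, c - d ≠ -m) (hcy : ∀ m : ℕ, c = -m → y ≠ 0) (hh : Tendsto h l (𝓝[>] 0))
    (hθ : Tendsto (fun i => (1 - Real.cos (θ i)) / h i ^ 2) l (𝓝 (y ^ 2 / 2))) :
    Tendsto (fun i => qPochPair (Real.exp (-(h i * c))) (Real.exp (-(h i * d))) (Real.exp (-h i)) /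
        qPochPair (Real.exp (-(h i * c))) (eI (θ i)) (Real.exp (-h i))) l
      (𝓝 (GammaSq c y / (Complex.Gamma (c + d : ℝ) * Complex.Gamma (c - d : ℝ)))) := by
  have hh_ne : Tendsto h l (𝓝[≠] 0) := hh.mono_right (nhdsGT_le_nhdsNE 0)
  have hpos : ∀ᶠ i in l, 0 < h i := hh.eventually self_mem_nhdsWithin
  have hD := tendsto_cos_sub_cosh_div_sq hh_ne hθ d
  rw [← tprod_one_sub_div_eq_GammaSq_div hadd hsub hcy]
  -- Any `η` with `|η| < |y|` works: the slack absorbs the `o(h²)` error in `1 - cos θ`.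
  refine tendsto_qPochPair_div_qPochPair (η := y / 2) hh
    (fun i => Complex.ofReal_ne_zero.2 (Real.exp_ne_zero _)) (fun i => eI_ne_zero _)
    (fun i => ofReal_exp_neg_add_inv _) (fun i => eI_add_inv _)
    (fun k hk => div_ne_zero (hcy k hk) two_ne_zero) ?_ hD fun k => ?_
  · rcases eq_or_ne y 0 with rfl | hy
    · exact .of_forall fun i => by simpa using Real.cos_le_one (θ i)
    · have hlt : (y / 2) ^ 2 / 2 < y ^ 2 / 2 := by
        have := sq_pos_of_ne_zero hy
        linarith
      filter_upwards [hθ.eventually_const_le hlt, hpos] with i hi hi_pos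
      rwa [le_div_iff₀ (pow_pos hi_pos 2)] at hi
  · have hden := ((tendsto_cosh_mul_sub_one_div_sq (c + k)).comp hh_ne).add hθ
    rw [← add_div] at hden
    have hlim := hD.div hden (div_pos (add_sq_add_sq_pos (hcy k)) two_pos).ne'
    rw [← neg_div, div_div_div_cancel_right₀ two_ne_zero, neg_div] at hlim
    refine hlim.congr' ?_
    filter_upwards [hpos] with i hi
    simp only [Function.comp_apply, Pi.div_apply, ← add_div]
    rw [div_div_div_cancel_right₀ (pow_pos hi 2).ne']
    congr 1
    ring

theorem tendsto_qPochPair_neg_eI_div_qPochPair_neg (c d : ℝ) (hh : Tendsto h l (𝓝[>] 0))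
    (hθ : Tendsto (fun i => (1 - Real.cos (θ i)) / h i ^ 2) l (𝓝 (y ^ 2 / 2))) :
    Tendsto (fun i => qPochPair (Real.exp (-(h i * c))) (-eI (θ i)) (Real.exp (-h i)) /
        qPochPair (Real.exp (-(h i * c))) (-Real.exp (-(h i * d))) (Real.exp (-h i))) l
      (𝓝 1) := by
  have hh_ne : Tendsto h l (𝓝[≠] 0) := hh.mono_right (nhdsGT_le_nhdsNE 0)
  have hh₀ : Tendsto h l (𝓝 0) := hh.mono_right nhdsWithin_le_nhds
  have hsq : Tendsto (fun i => h i ^ 2) l (𝓝 0) := by simpa using hh₀.pow 2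
  have hnum (i : ι) : -Real.cosh (h i * d) - -Real.cos (θ i) =
    Real.cos (θ i) - Real.cosh (h i * d) := by ring
  have hD := tendsto_cos_sub_cosh_div_sq hh_ne hθ d
  have hnum₀ : Tendsto (fun i => Real.cos (θ i) - Real.cosh (h i * d)) l (𝓝 0) := by
    have hlim := hD.mul hsq
    rw [mul_zero] at hlim
    refine hlim.congr' ?_
    filter_upwards [hh.eventually self_mem_nhdsWithin] with i hi
    exact div_mul_cancel₀ _ (pow_pos hi 2).ne'
  have hcosh (e : ℝ) : Tendsto (fun i => Real.cosh (h i * e)) l (𝓝 1) :=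
    (Real.continuous_cosh.tendsto' 0 1 Real.cosh_zero).comp (by simpa using hh₀.mul_const e)
  have hone : ∏' _ : ℕ, (1 + ((0 : ℝ) : ℂ)) = 1 := by simp
  rw [← hone]
  refine tendsto_qPochPair_div_qPochPair (η := 1) (α := fun i => -Real.cos (θ i))
    (β := fun i => -Real.cosh (h i * d)) hh (fun i => neg_ne_zero.2 (eI_ne_zero _))
    (fun i => neg_ne_zero.2 (Complex.ofReal_ne_zero.2 (Real.exp_ne_zero _)))
    (fun i => ?_) (fun i => ?_) (fun _ _ => one_ne_zero) ?_ (by simpa only [hnum] using hD)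
    fun k => ?_
  · rw [inv_neg, ← neg_add, eI_add_inv, Complex.ofReal_neg, mul_neg]
  · rw [inv_neg, ← neg_add, ofReal_exp_neg_add_inv, Complex.ofReal_neg, mul_neg]
  · filter_upwards [hsq.eventually_le_const one_pos] with i hi
    linarith [Real.one_le_cosh (h i * d)]
  · simp only [hnum]
    rw [show (0 : ℝ) = 0 / (1 - -1) by norm_num]
    exact hnum₀.div ((hcosh (c + k)).sub (hcosh d).neg) (by norm_num)

end Limit

lemma qpow_eq_exp (N : ℕ) (x : ℝ) : qpow N x = (Real.exp (-(2 / Real.sqrt N * x)) : ℂ) := by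
  rw [qpow]
  congr 2
  ring

lemma qN_eq_exp (N : ℕ) : qN N = Real.exp (-(2 / Real.sqrt N)) := by
  rw [qN, neg_div]

lemma qpow_mul_qpow (N : ℕ) (x y : ℝ) : qpow N x * qpow N y = qpow N (x + y) := by
  rw [qpow, qpow, qpow, ← Complex.ofReal_mul, ← Real.exp_add]
  congr 2
  ring

lemma qpow_mul_inv_qpow (N : ℕ) (x y : ℝ) : qpow N x * (qpow N y)⁻¹ = qpow N (x - y) := by
  rw [← sub_add_cancel x y, ← qpow_mul_qpow, mul_inv_cancel_right₀, add_sub_cancel_right]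
  exact Complex.ofReal_ne_zero.2 (Real.exp_ne_zero _)

lemma qPochPair_qpow_qpow (N : ℕ) (c d : ℝ) (q : ℂ) :
    qPochPair (qpow N c) (qpow N d) q =
      qPochInf (qpow N (c + d)) q * qPochInf (qpow N (c - d)) q := by
  rw [qPochPair, qpow_mul_qpow, qpow_mul_inv_qpow]

lemma qPochPair_qpow_neg_qpow (N : ℕ) (c d : ℝ) (q : ℂ) :
    qPochPair (qpow N c) (-qpow N d) q =
      qPochInf (-qpow N (c + d)) q * qPochInf (-qpow N (c - d)) q := by
  rw [qPochPair, inv_neg, mul_neg, mul_neg, qpow_mul_qpow, qpow_mul_inv_qpow]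

lemma qPochPair_eI (u q : ℂ) (x : ℝ) :
    qPochPair u (eI x) q = qPochInf (u * eI x) q * qPochInf (u * eI (-x)) q := by
  rw [qPochPair, eI_neg]

lemma qPochPair_neg_eI (u q : ℂ) (x : ℝ) :
    qPochPair u (-eI x) q = qPochInf (-u * eI x) q * qPochInf (-u * eI (-x)) q := by
  rw [qPochPair, eI_neg, inv_neg, mul_neg, mul_neg, neg_mul, neg_mul]

lemma tendsto_two_div_sqrt_natCast : Tendsto (fun N : ℕ => 2 / Real.sqrt N) atTop (𝓝[>] 0) := by
  refine tendsto_nhdsWithin_iff.2 ⟨tendsto_const_nhds.div_atTop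
    (Real.tendsto_sqrt_atTop.comp tendsto_natCast_atTop_atTop), ?_⟩
  filter_upwards [eventually_gt_atTop 0] with N hN
  exact div_pos two_pos (Real.sqrt_pos.2 (Nat.cast_pos.2 hN))

lemma tendsto_one_sub_cos_arccos_div_sq {ρ : ℝ} (hρ : 0 ≤ ρ) :
    Tendsto (fun N : ℕ => (1 - Real.cos (Real.arccos (1 - ρ / (2 * (N : ℝ))))) /
      (2 / Real.sqrt N) ^ 2) atTop (𝓝 ((Real.sqrt ρ / 2) ^ 2 / 2)) := by
  refine tendsto_const_nhds.congr' ?_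
  filter_upwards [tendsto_natCast_atTop_atTop.eventually_ge_atTop ρ, eventually_gt_atTop 0]
    with N hρN hN
  have hN' : (0 : ℝ) < N := Nat.cast_pos.2 hN
  have hle : ρ / (2 * (N : ℝ)) ≤ 2 := by
    rw [div_le_iff₀ (by positivity)]
    linarith
  have hnonneg : 0 ≤ ρ / (2 * (N : ℝ)) := by positivity
  rw [Real.cos_arccos (by linarith) (by linarith), div_pow, div_pow, Real.sq_sqrt hρ,
    Real.sq_sqrt hN'.le]
  field_simp
  ring

theorem statement4_general (v w s t ρ : ℝ) (hρ : 0 ≤ ρ) (hvs : ∀ m : ℕ, -2 * v - s ≠ -m)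
    (hts : ∀ m : ℕ, t - s ≠ -m) (hvst : ∀ m : ℕ, t / 2 - s - v = -m → ρ ≠ 0) :
    Tendsto (fun N : ℕ =>
      (qPochInf (qpow N (-2 * v - s)) (qN N) * qPochInf (qpow N (t - s)) (qN N) *
       (qPochInf (-(qpow N (w + t / 2)) * eI (Real.arccos (1 - ρ / (2 * (N : ℝ))))) (qN N) *
        qPochInf (-(qpow N (w + t / 2)) * eI (-(Real.arccos (1 - ρ / (2 * (N : ℝ)))))) (qN N))) /
      (qPochInf (-(qpow N (w - v))) (qN N) * qPochInf (-(qpow N (v + w + t))) (qN N) *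
       (qPochInf (qpow N (t / 2 - v - s) * eI (Real.arccos (1 - ρ / (2 * (N : ℝ))))) (qN N) *
        qPochInf (qpow N (t / 2 - v - s) * eI (-(Real.arccos (1 - ρ / (2 * (N : ℝ)))))) (qN N))))
      atTop
      (nhds (GammaSq (t / 2 - s - v) (Real.sqrt ρ / 2) /
        (Complex.Gamma ((-2 * v - s : ℝ) : ℂ) * Complex.Gamma ((t - s : ℝ) : ℂ)))) := by
  have hadd : t / 2 - v - s + (v + t / 2) = t - s := by ring
  have hsub : t / 2 - v - s - (v + t / 2) = -2 * v - s := by ring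
  have hadd' : w + t / 2 + (v + t / 2) = v + w + t := by ring
  have hsub' : w + t / 2 - (v + t / 2) = w - v := by ring
  have hedge (m : ℕ) (hm : t / 2 - v - s = -m) : Real.sqrt ρ / 2 ≠ 0 :=
    div_ne_zero ((Real.sqrt_ne_zero hρ).2 (hvst m (by rwa [sub_right_comm]))) two_ne_zero
  have hθ := tendsto_one_sub_cos_arccos_div_sq hρ
  have hGamma := tendsto_qPochPair_div_qPochPair_eI (c := t / 2 - v - s) (d := v + t / 2)
    (y := Real.sqrt ρ / 2) (by rwa [hadd]) (by rwa [hsub]) hedge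
    tendsto_two_div_sqrt_natCast hθ
  have hone := tendsto_qPochPair_neg_eI_div_qPochPair_neg (w + t / 2) (v + t / 2)
    tendsto_two_div_sqrt_natCast hθ
  simp only [← qpow_eq_exp, ← qN_eq_exp, qPochPair_qpow_qpow, qPochPair_qpow_neg_qpow,
    qPochPair_eI, qPochPair_neg_eI, hadd, hsub, hadd', hsub'] at hGamma hone
  have hlim := hGamma.mul hone
  rw [mul_one, mul_comm (Complex.Gamma _)] at hlim
  rw [sub_right_comm (t / 2) s v]
  refine hlim.congr fun N => ?_
  rw [div_mul_div_comm]
  congr 1 <;> ring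

theorem statement4 (v w s t ρ : ℝ) (hw : 0 < w) (hst : s < t) (hv : v + s / 2 < 0)
    (hρ : 0 < ρ) :
    Tendsto (fun N : ℕ =>
      (qPochInf (qpow N (-2 * v - s)) (qN N) * qPochInf (qpow N (t - s)) (qN N) *
       (qPochInf (-(qpow N (w + t / 2)) * eI (Real.arccos (1 - ρ / (2 * (N : ℝ))))) (qN N) *
        qPochInf (-(qpow N (w + t / 2)) * eI (-(Real.arccos (1 - ρ / (2 * (N : ℝ)))))) (qN N))) /
      (qPochInf (-(qpow N (w - v))) (qN N) * qPochInf (-(qpow N (v + w + t))) (qN N) *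
       (qPochInf (qpow N (t / 2 - v - s) * eI (Real.arccos (1 - ρ / (2 * (N : ℝ))))) (qN N) *
        qPochInf (qpow N (t / 2 - v - s) * eI (-(Real.arccos (1 - ρ / (2 * (N : ℝ)))))) (qN N))))
      atTop
      (nhds (GammaSq (t / 2 - s - v) (Real.sqrt ρ / 2) /
        (Complex.Gamma ((-2 * v - s : ℝ) : ℂ) * Complex.Gamma ((t - s : ℝ) : ℂ)))) :=
  statement4_general v w s t ρ hρ.le (fun m h => by linarith [m.cast_nonneg (α := ℝ)])
    (fun m h => by linarith [m.cast_nonneg (α := ℝ)]) fun _ _ => hρ.ne'
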